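/- Let R be a valuation ring with fraction field K and valuation v, and let n be a natural number. For any n×n matrix g over K (indexed by Fin n ⊕ Unit, i.e. an (n+1)×(n+1) matrix), there exist invertible matrices k₁, k₂ ∈ GL(R) of the same size such that the bottom-right entry of k₁·g·k₂ has valuation equal to the supremum of the valuations of all the entries of g. -/

import Mathlib

open Matrix

/-- Supremum of the valuations of the entries of a matrix (over a nonempty finite index type). -/
noncomputable def Matrix.coeffsSup {R : Type*} [CommRing R] [IsDomain R] [ValuationRing R]
    {K : Type*} [Field K] [Algebra R K] [IsFractionRing R K]
    {m : Type*} [Fintype m] [Nonempty m] (g : Matrix m m K) : ValuationRing.ValueGroup R K :=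
  Finset.univ.sup' Finset.univ_nonempty
    (fun p : m × m => ValuationRing.valuation R K (g p.1 p.2))

/-- Let `R` be a valuation ring with fraction field `K` and valuation `v`.
For any matrix `g` over `K` indexed by `Fin n ⊕ Unit`, there are `k₁ k₂ ∈ GL(R)` such that
the bottom-right entry of `k₁ * g * k₂` has valuation equal to the supremum of the
valuations of all entries of `g`. -/
theorem exists_normalization0 {R : Type*} [CommRing R] [IsDomain R] [ValuationRing R]
    {K : Type*} [Field K] [Algebra R K] [IsFractionRing R K]
    {n : ℕ} (g : Matrix (Fin n ⊕ Unit) (Fin n ⊕ Unit) K) :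
    ∃ k₁ k₂ : GL (Fin n ⊕ Unit) R,
      ValuationRing.valuation R K
        ((((Matrix.GeneralLinearGroup.map (n := Fin n ⊕ Unit) (algebraMap R K)) k₁).val * g *
          ((Matrix.GeneralLinearGroup.map (n := Fin n ⊕ Unit) (algebraMap R K)) k₂).val)
          (Sum.inr ()) (Sum.inr ())) =
      Matrix.coeffsSup (R := R) g := by
  obtain ⟨⟨i, j⟩, -, h⟩ := Finset.exists_mem_eq_sup'
    (Finset.univ_nonempty (α := (Fin n ⊕ Unit) × (Fin n ⊕ Unit)))
    (fun p => ValuationRing.valuation R K (g p.1 p.2))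
  refine ⟨GeneralLinearGroup.swap R (Sum.inr ()) i, GeneralLinearGroup.swap R (Sum.inr ()) j, ?_⟩
  unfold Matrix.coeffsSup
  rw [h]
  congr 1
  have e : ∀ a b : Fin n ⊕ Unit,
      ((Matrix.GeneralLinearGroup.map (n := Fin n ⊕ Unit) (algebraMap R K))
        (GeneralLinearGroup.swap R a b)).val = Matrix.swap K a b := by
    intro a b
    exact Matrix.map_swap (algebraMap R K) a b
  rw [e, e, Matrix.mul_swap_apply_left, Matrix.swap_mul_apply_left]
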